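/- Let λ ≥ L² > 0, and let x_1, …, x_n ∈ ℝ^d with ‖x_k‖₂ ≤ L for all k. Define V_0 = λI and V_k = V_{k-1} + x_k x_kᵀ for k = 1, …, n. Then Σ_{k=1}^n ‖x_k‖_{V_{k-1}^{-1}} ≤ √(2·n·d·log(1 + nL²/(dλ))). -/

import Mathlib

open Matrix

/-- The weighted norm `‖x‖_V = √(xᵀ V x)` associated with a matrix `V`. -/
noncomputable def wNorm {d : ℕ} (V : Matrix (Fin d) (Fin d) ℝ) (x : Fin d → ℝ) : ℝ :=
  Real.sqrt (x ⬝ᵥ V.mulVec x)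

/-- The Euclidean norm `‖x‖₂ = √(xᵀ x)` on `ℝ^d`. -/
noncomputable def eucNorm {d : ℕ} (x : Fin d → ℝ) : ℝ :=
  Real.sqrt (x ⬝ᵥ x)

theorem aux_le_one {d : ℕ} (lam L : ℝ) (hL : 0 < L) (hlam : L ^ 2 ≤ lam)
    (A : Matrix (Fin d) (Fin d) ℝ) (hA : A.PosDef) (v : Fin d → ℝ) (hv : v ⬝ᵥ v ≤ L ^ 2)
    (hb : ∀ y, lam * (y ⬝ᵥ y) ≤ y ⬝ᵥ A.mulVec y) :
    0 ≤ v ⬝ᵥ A⁻¹.mulVec v ∧ v ⬝ᵥ A⁻¹.mulVec v ≤ 1 := by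
  have hu : IsUnit A.det := hA.det_pos.ne'.isUnit
  set y := A⁻¹.mulVec v with hy
  have hAy : A.mulVec y = v := by
    rw [hy, Matrix.mulVec_mulVec, Matrix.mul_nonsing_inv _ hu, Matrix.one_mulVec]
  have h1 := hb y
  rw [hAy, dotProduct_comm y v] at h1
  have hyy : 0 ≤ y ⬝ᵥ y := by
    simp only [dotProduct]; exact Finset.sum_nonneg fun i _ => mul_self_nonneg _
  have hl : 0 < lam := lt_of_lt_of_le (by positivity) hlam
  have hq : 0 ≤ v ⬝ᵥ y := le_trans (by positivity) h1
  refine ⟨hq, ?_⟩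
  have hcs : (v ⬝ᵥ y) ^ 2 ≤ (v ⬝ᵥ v) * (y ⬝ᵥ y) := by
    have := Finset.sum_mul_sq_le_sq_mul_sq Finset.univ v y
    simpa only [dotProduct, ← pow_two] using this
  have h2 : (v ⬝ᵥ y) ^ 2 ≤ v ⬝ᵥ y :=
    calc (v ⬝ᵥ y) ^ 2 ≤ (v ⬝ᵥ v) * (y ⬝ᵥ y) := hcs
      _ ≤ lam * (y ⬝ᵥ y) := mul_le_mul_of_nonneg_right (hv.trans hlam) hyy
      _ ≤ _ := h1
  nlinarith

theorem aux_det {d : ℕ} (A : Matrix (Fin d) (Fin d) ℝ) (hA : A.PosDef) (v : Fin d → ℝ) :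
    (A + Matrix.vecMulVec v v).det = A.det * (1 + v ⬝ᵥ A⁻¹.mulVec v) := by
  have hu : IsUnit A.det := hA.det_pos.ne'.isUnit
  rw [Matrix.vecMulVec_eq Unit, Matrix.det_add_replicateCol_mul_replicateRow hu]
  congr 1
  rw [Matrix.det_unique]
  simp [Matrix.mul_apply, Matrix.add_apply, dotProduct, Matrix.mulVec, Finset.sum_mul, Finset.mul_sum, mul_assoc]
  rw [Finset.sum_comm]

theorem aux_logdet {d : ℕ} (A : Matrix (Fin d) (Fin d) ℝ) (hA : A.PosDef) (m : ℝ) (hm : 0 < m)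
    (ht : A.trace ≤ d * m) : Real.log A.det ≤ d * Real.log m := by
  have hdet : A.det = ∏ i, hA.isHermitian.eigenvalues i := by
    simpa using hA.isHermitian.det_eq_prod_eigenvalues
  have htr : A.trace = ∑ i, hA.isHermitian.eigenvalues i := by
    simpa using hA.isHermitian.trace_eq_sum_eigenvalues
  have hp := hA.eigenvalues_pos
  rw [hdet, Real.log_prod (fun i _ => (hp i).ne')]
  have h : ∀ i ∈ (Finset.univ : Finset (Fin d)), Real.log (hA.isHermitian.eigenvalues i) ≤
      Real.log m + (hA.isHermitian.eigenvalues i / m - 1) := by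
    intro i _
    have := Real.log_le_sub_one_of_pos (div_pos (hp i) hm)
    rw [Real.log_div (hp i).ne' hm.ne'] at this
    linarith
  refine (Finset.sum_le_sum h).trans ?_
  rw [Finset.sum_add_distrib, Finset.sum_sub_distrib, ← Finset.sum_div, ← htr]
  have : A.trace / m ≤ d := by rwa [div_le_iff₀ hm]
  simp
  linarith

theorem aux_log (q : ℝ) (h0 : 0 ≤ q) (h1 : q ≤ 1) : q ≤ 2 * Real.log (1 + q) := by
  have := Real.le_log_one_add_of_nonneg h0
  have h2 : q / 2 ≤ 2 * q / (q + 2) := by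
    rw [div_le_div_iff₀ (by norm_num) (by linarith)]; nlinarith
  linarith

/-- Cauchy–Schwarz consequence of the elliptical potential lemma;
source of the `√T` factor in the regret bound of Theorem 2 of the paper. With
`λ ≥ L² > 0`, `‖x_k‖₂ ≤ L`, `V_0 = λI` and `V_k = V_{k-1} + x_k x_kᵀ`, one has
`∑_{k=1}^n ‖x_k‖_{V_{k-1}⁻¹} ≤ √(2 n d log (1 + n L²/(d λ)))`. -/
theorem stmt_15 {d : ℕ} (lam L : ℝ) (hL : 0 < L) (hlam : L ^ 2 ≤ lam)
    (n : ℕ) (x : ℕ → Fin d → ℝ) (hx : ∀ k, 1 ≤ k → k ≤ n → eucNorm (x k) ≤ L)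
    (V : ℕ → Matrix (Fin d) (Fin d) ℝ)
    (hV0 : V 0 = lam • (1 : Matrix (Fin d) (Fin d) ℝ))
    (hVk : ∀ k, V (k + 1) = V k + Matrix.vecMulVec (x (k + 1)) (x (k + 1))) :
    (∑ k ∈ Finset.range n, wNorm (V k)⁻¹ (x (k + 1))) ≤
      Real.sqrt (2 * n * d * Real.log (1 + n * L ^ 2 / (d * lam))) := by
  have hl : 0 < lam := lt_of_lt_of_le (by positivity) hlam
  rcases Nat.eq_zero_or_pos d with rfl | hd
  · simp [wNorm]
  have hd' : (0 : ℝ) < d := by exact_mod_cast hd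
  have hx2 : ∀ k, k < n → x (k + 1) ⬝ᵥ x (k + 1) ≤ L ^ 2 := by
    intro k hk
    have := hx (k + 1) (by omega) (by omega)
    rw [eucNorm, Real.sqrt_le_left hL.le] at this
    exact this
  have hpd : ∀ k, (V k).PosDef := by
    intro k
    induction k with
    | zero => rw [hV0]; exact Matrix.PosDef.one.smul hl
    | succ k ih =>
      rw [hVk]
      refine ih.add_posSemidef ?_
      simpa using Matrix.posSemidef_vecMulVec_self_star (x (k + 1))
  have hb : ∀ k, ∀ y, lam * (y ⬝ᵥ y) ≤ y ⬝ᵥ (V k).mulVec y := by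
    intro k y
    induction k with
    | zero => rw [hV0]; simp [Matrix.smul_mulVec]
    | succ k ih =>
      have h2 : 0 ≤ y ⬝ᵥ (Matrix.vecMulVec (x (k + 1)) (x (k + 1))).mulVec y := by
        have h := (Matrix.posSemidef_vecMulVec_self_star (x (k + 1))).dotProduct_mulVec_nonneg y
        simpa using h
      rw [hVk, Matrix.add_mulVec, dotProduct_add]
      linarith
  set q : ℕ → ℝ := fun k => x (k + 1) ⬝ᵥ (V k)⁻¹.mulVec (x (k + 1)) with hq
  have hq01 : ∀ k, k < n → 0 ≤ q k ∧ q k ≤ 1 := fun k hk =>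
    aux_le_one lam L hL hlam (V k) (hpd k) _ (hx2 k hk) (hb k)
  have htr : ∀ k, k ≤ n → (V k).trace ≤ d * lam + k * L ^ 2 := by
    intro k
    induction k with
    | zero => intro _; rw [hV0]; simp [mul_comm]
    | succ k ih =>
      intro hk
      rw [hVk, Matrix.trace_add, Matrix.trace_vecMulVec]
      have := ih (by omega)
      have := hx2 k (by omega)
      push_cast
      linarith
  have hdet : ∀ k, k ≤ n →
      Real.log (V k).det = d * Real.log lam + ∑ j ∈ Finset.range k, Real.log (1 + q j) := by
    intro k
    induction k with
    | zero => intro _; rw [hV0]; simp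
    | succ k ih =>
      intro hk
      rw [hVk, aux_det _ (hpd k), Real.log_mul (hpd k).det_pos.ne', ih (by omega),
        Finset.sum_range_succ]
      · ring
      · have := (hq01 k (by omega)).1
        simp only [hq] at this
        linarith
  have hm : lam * (1 + n * L ^ 2 / (d * lam)) = lam + n * L ^ 2 / d := by field_simp
  have hpos : 0 < 1 + n * L ^ 2 / (d * lam) := by positivity
  have hld := aux_logdet (V n) (hpd n) (lam * (1 + n * L ^ 2 / (d * lam))) (by positivity) (by
    refine (htr n le_rfl).trans (le_of_eq ?_)
    field_simp)
  rw [hdet n le_rfl, Real.log_mul hl.ne' hpos.ne'] at hld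
  have hsum : ∑ k ∈ Finset.range n, q k ≤ 2 * (d * Real.log (1 + n * L ^ 2 / (d * lam))) := by
    calc _ ≤ ∑ k ∈ Finset.range n, 2 * Real.log (1 + q k) :=
          Finset.sum_le_sum fun k hk => by
            have := hq01 k (Finset.mem_range.1 hk)
            exact aux_log _ this.1 this.2
      _ = 2 * ∑ k ∈ Finset.range n, Real.log (1 + q k) := by rw [Finset.mul_sum]
      _ ≤ _ := by linarith
  apply Real.le_sqrt_of_sq_le
  have hcs := sq_sum_le_card_mul_sum_sq (s := Finset.range n)
    (f := fun k => wNorm (V k)⁻¹ (x (k + 1)))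
  refine hcs.trans ?_
  have he : ∑ k ∈ Finset.range n, wNorm (V k)⁻¹ (x (k + 1)) ^ 2 = ∑ k ∈ Finset.range n, q k :=
    Finset.sum_congr rfl fun k hk =>
      Real.sq_sqrt (hq01 k (Finset.mem_range.1 hk)).1
  rw [he, Finset.card_range]
  have := mul_le_mul_of_nonneg_left hsum (Nat.cast_nonneg (α := ℝ) n)
  linarith
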